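/- arXiv:1501.05753 — 2 statements merged into one kernel-verified Lean document; each statement's English description precedes it below -/
import Mathlib

section
/- Let A be a unital C*-algebra and a ∈ A. Let θ : [0,∞) → [0,∞) be continuous on (0,∞), with θ(t) > 0 for all t ≠ 0 and θ(t) → +∞ as t → 0⁺. Let (h_n) be a decreasing sequence of continuous functions h_n : [0,∞) → [0,1] converging pointwise to the characteristic function of {0}. Let m ∈ ℝ_+ and let Λ_{a,m,θ} be the set of traces τ on A with τ(θ(|a|)) ≤ m. Then for every τ ∈ Λ_{a,m,θ} the sequence (τ(h_n(|a|)))_n converges to dim_τ(ker a), and the convergence is uniform on Λ_{a,m,θ}. -/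
open scoped ComplexOrder ENNReal
open Filter Topology Matrix

set_option synthInstance.maxHeartbeats 1000000
set_option maxHeartbeats 1000000

noncomputable section

/-- A (finite positive) trace on a unital C*-algebra `A`: a positive linear functional
`τ : A → ℂ` satisfying `τ (x * y) = τ (y * x)`. -/
def IsCStarTrace {A : Type*} [CStarAlgebra A] (τ : A → ℂ) : Prop :=
  (∀ x y : A, τ (x + y) = τ x + τ y) ∧ (∀ (c : ℂ) (x : A), τ (c • x) = c * τ x) ∧
  (∀ x : A, 0 ≤ τ (star x * x)) ∧ (∀ x y : A, τ (x * y) = τ (y * x))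

/-- `|x| = (x* x)^{1/2}`, via the continuous functional calculus. -/
def cfcAbs {A : Type*} [CStarAlgebra A] (x : A) : A := cfc Real.sqrt (star x * x)

/-- `dim_τ(ker x) := inf { τ(h(|x|)) : h : [0,∞) → [0,1] continuous, h 0 = 1 }`. -/
def traceKerDim {A : Type*} [CStarAlgebra A] (τ : A → ℂ) (x : A) : ℝ :=
  sInf {r : ℝ | ∃ h : ℝ → ℝ, ContinuousOn h (Set.Ici 0) ∧
    (∀ t ∈ Set.Ici (0:ℝ), h t ∈ Set.Icc (0:ℝ) 1) ∧ h 0 = 1 ∧ r = (τ (cfc h (cfcAbs x))).re}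

/-- `τ(θ(|a|)) := sup { τ(g(|a|)) : g : [0,∞) → ℝ continuous, g ≤ θ } ∈ ℝ ∪ {+∞}`, for a
lower semicontinuous `θ`. -/
def traceLsc {A : Type*} [CStarAlgebra A] (τ : A → ℂ) (x : A) (θ : ℝ → ℝ) : EReal :=
  ⨆ g ∈ {g : ℝ → ℝ | ContinuousOn g (Set.Ici 0) ∧ ∀ t ∈ Set.Ici (0:ℝ), g t ≤ θ t},
    ((τ (cfc g (cfcAbs x))).re : EReal)

/-!
On the spectrum of `|a|` the functional `τ` is integration against a positive measure, and the bound
`τ(θ(|a|)) ≤ m` limits the mass that this measure can place near `0` but off `0`. Quantitatively,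
fix `δ > 0`. Near `0` we have `δ * θ ≥ 1 ≥ h_n`, and on the rest of a compact neighbourhood of the
spectrum `θ` is bounded below while `h_n → 0` uniformly, so `h_n ≤ δ * θ` off `0` for all large `n`.
For any competitor `k` in the infimum defining `dim_τ(ker a)`, the function `(h_n - k) / δ` is then
below `θ`, also at `0`, so that `τ(h_n(|a|)) ≤ τ(k(|a|)) + δ * m`, whence
`dim_τ(ker a) ≤ τ(h_n(|a|)) ≤ dim_τ(ker a) + δ * m` with a threshold on `n` independent of `τ`.
-/

lemma exists_pos_forall_le_of_lowerSemicontinuousOn {X : Type*} [TopologicalSpace X] {s : Set X}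
    {f : X → ℝ} (hs : IsCompact s) (hf : LowerSemicontinuousOn f s) (hpos : ∀ x ∈ s, 0 < f x) :
    ∃ c > 0, ∀ x ∈ s, c ≤ f x := by
  rcases s.eq_empty_or_nonempty with rfl | hne
  · exact ⟨1, one_pos, fun x hx => hx.elim⟩
  · obtain ⟨x, hx, hmin⟩ := hf.exists_isMinOn hne hs
    exact ⟨f x, hpos x hx, fun y hy => hmin hy⟩

lemma eventually_forall_mem_le_mul {ι : Type*} {l : Filter ι} {h : ι → ℝ → ℝ} {θ : ℝ → ℝ}
    (hθlsc : LowerSemicontinuousOn θ (Set.Ioi 0)) (hθpos : ∀ t, 0 < t → 0 < θ t)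
    (hθtop : Tendsto θ (𝓝[>] 0) atTop) (hh_le_one : ∀ i t, 0 < t → h i t ≤ 1)
    (hh : TendstoLocallyUniformlyOn h 0 l (Set.Ioi 0)) {K : Set ℝ} (hK : IsCompact K) {δ : ℝ}
    (hδ : 0 < δ) : ∀ᶠ i in l, ∀ t ∈ K, 0 < t → h i t ≤ δ * θ t := by
  obtain ⟨r, hr, one_le⟩ : ∃ r > 0, ∀ t ∈ Set.Ioo 0 r, 1 ≤ δ * θ t :=
    mem_nhdsGT_iff_exists_Ioo_subset.1 ((hθtop.const_mul_atTop hδ).eventually_ge_atTop 1)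
  have hsub : K ∩ Set.Ici r ⊆ Set.Ioi 0 := fun t ht => hr.trans_le ht.2
  have hcompact : IsCompact (K ∩ Set.Ici r) := hK.inter_right isClosed_Ici
  obtain ⟨c, hc, c_le⟩ := exists_pos_forall_le_of_lowerSemicontinuousOn hcompact
    (hθlsc.mono hsub) fun t ht => hθpos t (hsub ht)
  have hunif : TendstoUniformlyOn h 0 l (K ∩ Set.Ici r) :=
    (tendstoLocallyUniformlyOn_iff_forall_isCompact isOpen_Ioi).1 hh _ hsub hcompact
  filter_upwards [Metric.tendstoUniformlyOn_iff.1 hunif (δ * c) (mul_pos hδ hc)]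
    with i hi t htK ht
  rcases lt_or_ge t r with htr | hrt
  · exact (hh_le_one i t ht).trans (one_le t ⟨ht, htr⟩)
  · calc
      h i t ≤ dist 0 (h i t) := by simpa using le_abs_self (h i t)
      _ ≤ δ * c := (hi t ⟨htK, hrt⟩).le
      _ ≤ δ * θ t := by gcongr; exact c_le t ⟨htK, hrt⟩

section Functional

variable {A : Type*} [CStarAlgebra A] {τ : A → ℂ} {a : A} {θ f g : ℝ → ℝ} {K : Set ℝ} {m δ : ℝ}

lemma spectrum_cfcAbs_subset_Ici (a : A) : spectrum ℝ (cfcAbs a) ⊆ Set.Ici 0 := by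
  rw [cfcAbs, cfc_map_spectrum Real.sqrt (star a * a)]
  rintro _ ⟨x, -, rfl⟩
  exact Real.sqrt_nonneg x

lemma re_cfc_le_of_traceLsc_le (hm : traceLsc τ a θ ≤ m) (hg : ContinuousOn g (Set.Ici 0))
    (hgθ : ∀ t ∈ Set.Ici (0 : ℝ), g t ≤ θ t) : (τ (cfc g (cfcAbs a))).re ≤ m :=
  EReal.coe_le_coe_iff.1 <| hm.trans' <|
    le_iSup₂_of_le (f := fun g _ => ((τ (cfc g (cfcAbs a))).re : EReal)) g ⟨hg, hgθ⟩ le_rfl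

-- Multiplying `g` by a cutoff supported in `K` brings it below `θ` everywhere.
lemma re_cfc_le_of_traceLsc_le_of_subset_interior (hm : traceLsc τ a θ ≤ m)
    (hθ : ∀ t ∈ Set.Ici (0 : ℝ), 0 ≤ θ t) (hK : spectrum ℝ (cfcAbs a) ⊆ interior K)
    (hg : ContinuousOn g (Set.Ici 0)) (hgθ : ∀ t ∈ K, 0 ≤ t → g t ≤ θ t) :
    (τ (cfc g (cfcAbs a))).re ≤ m := by
  obtain ⟨φ, φ_eq_zero, φ_eq_one, hφ⟩ := exists_continuous_zero_one_of_isCompact'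
    (spectrum.isCompact (𝕜 := ℝ) (cfcAbs a)) isOpen_interior.isClosed_compl
    (Set.disjoint_compl_right_iff_subset.2 hK)
  have hcfc : cfc g (cfcAbs a) = cfc (fun t => φ t * g t) (cfcAbs a) :=
    cfc_congr fun t ht => by simp [φ_eq_one ht]
  rw [hcfc]
  refine re_cfc_le_of_traceLsc_le hm (φ.continuous.continuousOn.mul hg) fun t ht => ?_
  by_cases htK : t ∈ interior K
  · calc
      φ t * g t ≤ φ t * θ t := by
        gcongr
        exacts [(hφ t).1, hgθ t (interior_subset htK) ht]
      _ ≤ θ t := mul_le_of_le_one_left (hθ t ht) (hφ t).2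
  · simpa [φ_eq_zero htK] using hθ t ht

lemma re_cfc_const_mul_sub (hτ : IsLinearMap ℂ τ) {b : A} (c : ℝ)
    (hf : ContinuousOn f (spectrum ℝ b)) (hg : ContinuousOn g (spectrum ℝ b)) :
    (τ (cfc (fun t => c * (f t - g t)) b)).re = c * ((τ (cfc f b)).re - (τ (cfc g b)).re) := by
  rw [cfc_const_mul c (fun t => f t - g t) b (hf.sub hg), cfc_sub f g b hf hg, ← Complex.coe_smul,
    hτ.map_smul, hτ.map_sub, smul_eq_mul, Complex.re_ofReal_mul, Complex.sub_re]

lemma re_cfc_le_re_cfc_add (hτ : IsLinearMap ℂ τ) (hm : traceLsc τ a θ ≤ m)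
    (hθ : ∀ t ∈ Set.Ici (0 : ℝ), 0 ≤ θ t) (hK : spectrum ℝ (cfcAbs a) ⊆ interior K)
    (hf : ContinuousOn f (Set.Ici 0)) (hg : ContinuousOn g (Set.Ici 0))
    (hfg0 : f 0 ≤ g 0) (hg_nonneg : ∀ t ∈ Set.Ici (0 : ℝ), 0 ≤ g t) (hδ : 0 < δ)
    (hfθ : ∀ t ∈ K, 0 < t → f t ≤ δ * θ t) :
    (τ (cfc f (cfcAbs a))).re ≤ (τ (cfc g (cfcAbs a))).re + δ * m := by
  have hdiff : ∀ t ∈ K, 0 ≤ t → δ⁻¹ * (f t - g t) ≤ θ t := by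
    intro t htK ht
    rw [inv_mul_le_iff₀ hδ]
    rcases ht.eq_or_lt with rfl | ht_pos
    · exact (sub_nonpos.2 hfg0).trans (mul_nonneg hδ.le (hθ 0 Set.self_mem_Ici))
    · linarith [hfθ t htK ht_pos, hg_nonneg t ht]
  have hσ := spectrum_cfcAbs_subset_Ici a
  have hle : (τ (cfc (fun t => δ⁻¹ * (f t - g t)) (cfcAbs a))).re ≤ m :=
    re_cfc_le_of_traceLsc_le_of_subset_interior hm hθ hK (continuousOn_const.mul (hf.sub hg)) hdiff
  rw [re_cfc_const_mul_sub hτ _ (hf.mono hσ) (hg.mono hσ), inv_mul_le_iff₀ hδ] at hle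
  linarith

lemma re_cfc_le_traceKerDim_add (hτ : IsLinearMap ℂ τ) (hm : traceLsc τ a θ ≤ m)
    (hθ : ∀ t ∈ Set.Ici (0 : ℝ), 0 ≤ θ t) (hK : spectrum ℝ (cfcAbs a) ⊆ interior K)
    (hf : ContinuousOn f (Set.Ici 0)) (hf0 : f 0 ≤ 1) (hδ : 0 < δ)
    (hfθ : ∀ t ∈ K, 0 < t → f t ≤ δ * θ t) :
    (τ (cfc f (cfcAbs a))).re ≤ traceKerDim τ a + δ * m := by
  rw [← sub_le_iff_le_add]
  refine le_csInf ⟨_, fun _ => 1, continuousOn_const, fun _ _ => by simp, rfl, rfl⟩ ?_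
  rintro _ ⟨k, hk, hk01, hk0, rfl⟩
  rw [sub_le_iff_le_add]
  exact re_cfc_le_re_cfc_add hτ hm hθ hK hf hk (hf0.trans_eq hk0.symm) (fun t ht => (hk01 t ht).1)
    hδ hfθ

/-- A positive linear functional on a C⋆-algebra, as a predicate on bare functions so that it
compares directly with `IsCStarTrace`. -/
structure IsPositiveFunctional (τ : A → ℂ) : Prop extends IsLinearMap ℂ τ where
  map_star_mul_self_nonneg : ∀ x, 0 ≤ τ (star x * x)

lemma IsCStarTrace.isPositiveFunctional (hτ : IsCStarTrace τ) : IsPositiveFunctional τ where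
  map_add := hτ.1
  map_smul := hτ.2.1
  map_star_mul_self_nonneg := hτ.2.2.1

namespace IsPositiveFunctional

lemma re_cfc_nonneg (hτ : IsPositiveFunctional τ) {b : A} (hf : ∀ t ∈ spectrum ℝ b, 0 ≤ f t) :
    0 ≤ (τ (cfc f b)).re := by
  let := CStarAlgebra.spectralOrder A
  let := CStarAlgebra.spectralOrderedRing A
  obtain ⟨x, hx⟩ := CStarAlgebra.nonneg_iff_eq_star_mul_self.1 (cfc_nonneg hf)
  rw [hx]
  exact (Complex.le_def.1 (hτ.map_star_mul_self_nonneg x)).1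

lemma traceKerDim_le (hτ : IsPositiveFunctional τ) (hf : ContinuousOn f (Set.Ici 0))
    (hf01 : ∀ t ∈ Set.Ici (0 : ℝ), f t ∈ Set.Icc (0 : ℝ) 1) (hf0 : f 0 = 1) :
    traceKerDim τ a ≤ (τ (cfc f (cfcAbs a))).re := by
  refine csInf_le ⟨0, ?_⟩ ⟨f, hf, hf01, hf0, rfl⟩
  rintro _ ⟨k, -, hk01, -, rfl⟩
  exact hτ.re_cfc_nonneg fun t ht => (hk01 t (spectrum_cfcAbs_subset_Ici a ht)).1

end IsPositiveFunctional

theorem stmt13_general (a : A) (hθlsc : LowerSemicontinuousOn θ (Set.Ioi 0)) (hθ0 : 0 ≤ θ 0)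
    (hθpos : ∀ t, 0 < t → 0 < θ t) (hθtop : Tendsto θ (𝓝[>] 0) atTop)
    {ι : Type*} {l : Filter ι} {h : ι → ℝ → ℝ} (hhc : ∀ i, ContinuousOn (h i) (Set.Ici 0))
    (hh01 : ∀ i, ∀ t ∈ Set.Ici (0 : ℝ), h i t ∈ Set.Icc (0 : ℝ) 1) (hh0 : ∀ i, h i 0 = 1)
    (hhlim : TendstoLocallyUniformlyOn h 0 l (Set.Ioi 0)) (m : ℝ) :
    TendstoUniformlyOn (fun i (τ : A → ℂ) => (τ (cfc (h i) (cfcAbs a))).re)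
      (fun τ => traceKerDim τ a) l
      {τ : A → ℂ | IsPositiveFunctional τ ∧ traceLsc τ a θ ≤ (m : EReal)} := by
  have hθ : ∀ t ∈ Set.Ici (0 : ℝ), 0 ≤ θ t := fun t (ht : 0 ≤ t) =>
    ht.eq_or_lt.elim (fun h0 => h0 ▸ hθ0) fun h0 => (hθpos t h0).le
  obtain ⟨K, hK, hσK⟩ := exists_compact_superset (spectrum.isCompact (𝕜 := ℝ) (cfcAbs a))
  refine Metric.tendstoUniformlyOn_iff.2 fun ε hε => ?_
  obtain ⟨δ, hδ, hδm⟩ : ∃ δ > 0, δ * m < ε := by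
    simpa only [mul_comm m] using exists_pos_mul_lt hε m
  filter_upwards [eventually_forall_mem_le_mul hθlsc hθpos hθtop
    (fun i t ht => (hh01 i t ht.le).2) hhlim hK hδ] with i hi τ ⟨hτ, hm⟩
  have lower : traceKerDim τ a ≤ (τ (cfc (h i) (cfcAbs a))).re :=
    hτ.traceKerDim_le (hhc i) (hh01 i) (hh0 i)
  have upper : (τ (cfc (h i) (cfcAbs a))).re ≤ traceKerDim τ a + δ * m :=
    re_cfc_le_traceKerDim_add hτ.toIsLinearMap hm hθ hσK (hhc i) (hh0 i).le hδ hi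
  rw [Real.dist_eq, abs_lt]
  constructor <;> linarith

end Functional

/-- with `θ` continuous on `(0,∞)`, positive away from `0` and tending to
`+∞` at `0⁺`, and `h_n` a decreasing sequence of continuous `[0,1]`-valued functions
converging pointwise to the characteristic function of `{0}`, the sequence
`τ(h_n(|a|))` converges to `dim_τ(ker a)` for every `τ ∈ Λ_{a,m,θ}`, uniformly on
`Λ_{a,m,θ} = {τ : τ(θ(|a|)) ≤ m}`. -/
theorem stmt13 {A : Type*} [CStarAlgebra A] (a : A) (θ : ℝ → ℝ)
    (hθc : ContinuousOn θ (Set.Ioi 0)) (hθ0 : ∀ t ∈ Set.Ici (0:ℝ), 0 ≤ θ t)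
    (hθpos : ∀ t : ℝ, 0 < t → 0 < θ t)
    (hθtop : Tendsto θ (𝓝[>] 0) atTop)
    (h : ℕ → ℝ → ℝ) (hhc : ∀ n, ContinuousOn (h n) (Set.Ici 0))
    (hh01 : ∀ n, ∀ t ∈ Set.Ici (0:ℝ), h n t ∈ Set.Icc (0:ℝ) 1)
    (hhanti : ∀ t ∈ Set.Ici (0:ℝ), Antitone fun n => h n t)
    (hhlim0 : ∀ t : ℝ, 0 < t → Tendsto (fun n => h n t) atTop (𝓝 0))
    (hhlim1 : Tendsto (fun n => h n 0) atTop (𝓝 1))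
    (m : ℝ) (hm : 0 ≤ m) :
    (∀ τ ∈ {τ : A → ℂ | IsCStarTrace τ ∧ traceLsc τ a θ ≤ (m : EReal)},
      Tendsto (fun n => (τ (cfc (h n) (cfcAbs a))).re) atTop (𝓝 (traceKerDim τ a))) ∧
    TendstoUniformlyOn (fun n (τ : A → ℂ) => (τ (cfc (h n) (cfcAbs a))).re)
      (fun τ => traceKerDim τ a) atTop
      {τ : A → ℂ | IsCStarTrace τ ∧ traceLsc τ a θ ≤ (m : EReal)} := by
  have hh0 : ∀ n, h n 0 = 1 := fun n =>
    (hh01 n 0 Set.self_mem_Ici).2.antisymm ((hhanti 0 Set.self_mem_Ici).le_of_tendsto hhlim1 n)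
  have dini : TendstoLocallyUniformlyOn h 0 atTop (Set.Ioi 0) :=
    Antitone.tendstoLocallyUniformlyOn_of_forall_tendsto
      (fun n => (hhc n).mono Set.Ioi_subset_Ici_self)
      (fun t ht => hhanti t (Set.Ioi_subset_Ici_self ht))
      continuousOn_const hhlim0
  have unif := (stmt13_general a hθc.lowerSemicontinuousOn (hθ0 0 Set.self_mem_Ici) hθpos hθtop
    hhc hh01 hh0 dini m).mono
      (Set.ofPred_subset_ofPred.2 fun _ => And.imp_left IsCStarTrace.isPositiveFunctional)
  exact ⟨fun τ hτ => unif.tendsto_at hτ, unif⟩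

end
end

section
/- Let A be a unital C*-algebra and a, b, c ∈ A with a and c invertible. Then for every trace τ on A, τ(ln_+|abc|) ≤ ln(‖a‖·‖c‖)·rk_τ(b) + τ(ln_+|b|), where rk_τ(b) := τ(1) − dim_τ(ker b). -/
open scoped ComplexOrder ENNReal
open Filter Topology Matrix

set_option synthInstance.maxHeartbeats 1000000
set_option maxHeartbeats 1000000

noncomputable section

/-- The set of continuous majorants of `ln₊` on `[0,∞)`.  (Recall that `Real.log 0 = 0`,
so that `Real.log` agrees with `ln₊` on `[0,∞)`.) -/
def lnPlusMajorants : Set (ℝ → ℝ) :=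
  {g | ContinuousOn g (Set.Ici 0) ∧ ∀ t ∈ Set.Ici (0:ℝ), Real.log t ≤ g t}

/-- `τ(ln₊ |x|) := inf { τ(g(|x|)) : g : [0,∞) → ℝ continuous, g ≥ ln₊ } ∈ ℝ ∪ {−∞}`. -/
def traceLnPlus {A : Type*} [CStarAlgebra A] (τ : A → ℂ) (x : A) : EReal :=
  ⨅ g ∈ lnPlusMajorants, ((τ (cfc g (cfcAbs x))).re : EReal)

/-- `rk_τ(b) := τ(1) - dim_τ(ker b)`, the von Neumann rank of `b`. -/
def traceRank {A : Type*} [CStarAlgebra A] (τ : A → ℂ) (b : A) : ℝ :=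
  (τ 1).re - traceKerDim τ b

/-!
If `f` is operator monotone on `[0, ∞)` then `τ(f(|abc|²)) ≤ τ(f(‖a‖²‖c‖²|b|²))`: the left factor is
removed by `(ax)*(ax) ≤ ‖a‖² x*x`, and the right one in the same way after replacing `x*x` by `xx*`,
which a trace does not notice. Taking `f(t) = 1 - 1/(1 + t)` and rescaling by `s → ∞` shows that
`rk_τ(abc) ≤ rk_τ(b)`, with equality when `a` and `c` are invertible. Taking `f(t) = ln(1 + t)`
compares the regularisations `τ(ln √(1 + s²|x|²)) - ln s · rk_τ(x)` of `τ(ln₊|x|)` at `x = abc` with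
scale `s` and at `x = b` with scale `s‖a‖‖c‖`; as the ranks agree, the two normalisations differ by
exactly `ln(‖a‖‖c‖) · rk_τ(b)`, and `s → ∞` gives the claim.
-/

section FunctionalCalculus

variable {A : Type*} [CStarAlgebra A]

lemma spectrum_star_mul_self_subset (x : A) :
    spectrum ℝ (star x * x) ⊆ Set.Icc 0 (‖x‖ ^ 2) := by
  intro t ht
  refine ⟨spectrum_star_mul_self_nonneg t ht, ?_⟩
  rcases subsingleton_or_nontrivial A with _ | _
  · simp at ht
  · calc t ≤ ‖t‖ := le_abs_self t
      _ ≤ ‖star x * x‖ := spectrum.norm_le_norm_of_mem ht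
      _ = ‖x‖ ^ 2 := by rw [CStarRing.norm_star_mul_self, sq]

lemma spectrum_cfcAbs_subset (x : A) : spectrum ℝ (cfcAbs x) ⊆ Set.Ici 0 := by
  rw [cfcAbs, cfc_map_spectrum ..]
  rintro _ ⟨t, -, rfl⟩
  exact Real.sqrt_nonneg t

lemma isSelfAdjoint_cfcAbs (x : A) : IsSelfAdjoint (cfcAbs x) := cfc_predicate _ _

lemma cfcAbs_sq (x : A) : cfcAbs x ^ 2 = star x * x := by
  rw [cfcAbs, ← cfc_pow ..]
  conv_rhs => rw [← cfc_id' ℝ (star x * x)]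
  exact cfc_congr fun t ht => Real.sq_sqrt (spectrum_star_mul_self_nonneg t ht)

lemma cfc_comp_mul_sq_cfcAbs {f : ℝ → ℝ} (hf : ContinuousOn f (Set.Ici 0)) (s : ℝ) (x : A) :
    cfc (fun t => f ((s * t) ^ 2)) (cfcAbs x) = cfc f (star (s • x) * (s • x)) := by
  have hx := isSelfAdjoint_cfcAbs x
  have hsq : star (s • x) * (s • x) = cfc (fun t : ℝ => (s * t) ^ 2) (cfcAbs x) := by
    rw [cfc_pow .., cfc_const_mul_id .., smul_pow, cfcAbs_sq, star_smul, smul_mul_smul_comm,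
      star_trivial, ← sq]
  rw [hsq]
  refine cfc_comp' f _ _ (hf.mono ?_)
  rintro _ ⟨t, -, rfl⟩
  exact sq_nonneg (s * t)

lemma cfc_one_add {u : A} (hu : IsSelfAdjoint u) : cfc (fun t : ℝ => 1 + t) u = 1 + u := by
  rw [cfc_const_add .., cfc_id' .., map_one]

end FunctionalCalculus

section OperatorMonotone

variable {A : Type*} [CStarAlgebra A] [PartialOrder A] [StarOrderedRing A]

lemma star_mul_self_mul_le (a b : A) :
    star (a * b) * (a * b) ≤ star (‖a‖ • b) * (‖a‖ • b) := by
  have h := CStarAlgebra.star_left_conjugate_le_norm_smul (a := b) (b := star a * a)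
  rw [CStarRing.norm_star_mul_self] at h
  simpa [mul_assoc, smul_smul] using h

lemma one_add_ne_zero_of_mem_spectrum {u : A} (hu : 0 ≤ u) {t : ℝ} (ht : t ∈ spectrum ℝ u) :
    1 + t ≠ 0 := by
  linarith [spectrum_nonneg_of_nonneg hu ht]

lemma monotoneOn_cfc_log_one_add :
    MonotoneOn (cfc fun t : ℝ => Real.log (1 + t)) (Set.Ici (0 : A)) := by
  have cfc_eq_log {u : A} (hu : 0 ≤ u) :
      cfc (fun t : ℝ => Real.log (1 + t)) u = CFC.log (1 + u) := by
    rw [cfc_comp' Real.log (fun t => 1 + t) u (Real.continuousOn_log.mono ?_), CFC.log,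
      cfc_one_add (.of_nonneg hu)]
    rintro _ ⟨t, ht, rfl⟩
    exact one_add_ne_zero_of_mem_spectrum hu ht
  intro u hu v hv huv
  simp only [cfc_eq_log hu, cfc_eq_log hv]
  exact CFC.log_le_log (by gcongr) (.add_nonneg isStrictlyPositive_one hu)

lemma monotoneOn_cfc_one_sub_inv_one_add :
    MonotoneOn (cfc fun t : ℝ => 1 - (1 + t)⁻¹) (Set.Ici (0 : A)) := by
  have cfc_eq_inverse {u : A} (hu : 0 ≤ u) :
      cfc (fun t : ℝ => 1 - (1 + t)⁻¹) u = 1 - Ring.inverse (1 + u) := by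
    have hne (t) (ht : t ∈ spectrum ℝ u) := one_add_ne_zero_of_mem_spectrum hu ht
    rw [cfc_sub (fun _ => 1) (fun t => (1 + t)⁻¹) u continuousOn_const (.inv₀ (by fun_prop) hne),
      cfc_const_one .., cfc_inv (fun t => 1 + t) u hne, cfc_one_add (.of_nonneg hu)]
  intro u hu v hv huv
  simp only [cfc_eq_inverse hu, cfc_eq_inverse hv]
  exact sub_le_sub_left (CStarAlgebra.antitoneOn_ringInverse (.add_nonneg isStrictlyPositive_one hu)
    (.add_nonneg isStrictlyPositive_one hv) (by gcongr)) 1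

end OperatorMonotone

section RealBounds

lemma continuousOn_log_one_add : ContinuousOn (fun t : ℝ => Real.log (1 + t)) (Set.Ici 0) :=
  .log (by fun_prop) fun t (ht : 0 ≤ t) => by positivity

lemma continuousOn_one_sub_inv_one_add :
    ContinuousOn (fun t : ℝ => 1 - (1 + t)⁻¹) (Set.Ici 0) :=
  continuousOn_const.sub (.inv₀ (by fun_prop) fun t (ht : 0 ≤ t) => by positivity)

lemma continuousOn_comp_mul_sq {f : ℝ → ℝ} (hf : ContinuousOn f (Set.Ici 0)) (s : ℝ) :
    ContinuousOn (fun t => f ((s * t) ^ 2)) (Set.Ici 0) :=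
  hf.comp (by fun_prop) fun t _ => sq_nonneg (s * t)

lemma exists_pos_forall_lt_of_continuousOn {g : ℝ → ℝ} (hg : ContinuousOn g (Set.Ici 0)) {m : ℝ}
    (hm : m < g 0) : ∃ r > 0, ∀ t, 0 ≤ t → t < r → m < g t := by
  obtain ⟨r, hr, hsub⟩ :=
    mem_nhdsGE_iff_exists_Ico_subset.1 ((hg 0 Set.self_mem_Ici).eventually (lt_mem_nhds hm))
  exact ⟨r, hr, fun t ht htr => hsub ⟨ht, htr⟩⟩

lemma eventually_inv_mul_sq_le {r δ : ℝ} (hr : 0 < r) (hδ : 0 < δ) :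
    ∀ᶠ s : ℝ in atTop, ∀ t ≥ r, ((s * t) ^ 2)⁻¹ ≤ δ := by
  have hlim : Tendsto (fun s : ℝ => ((s * r) ^ 2)⁻¹) atTop (𝓝 0) :=
    ((tendsto_pow_atTop two_ne_zero).comp (tendsto_id.atTop_mul_const hr)).inv_tendsto_atTop
  filter_upwards [hlim.eventually_le_const hδ, eventually_gt_atTop 0] with s hs hs_pos t ht
  exact hs.trans' (by gcongr)

lemma eventually_inv_one_add_mul_sq_le_add {h : ℝ → ℝ} (hh : ContinuousOn h (Set.Ici 0))
    (h_nonneg : ∀ t ∈ Set.Ici (0 : ℝ), 0 ≤ h t) (h_zero : 1 ≤ h 0) {δ : ℝ} (hδ : 0 < δ) :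
    ∀ᶠ s : ℝ in atTop, ∀ t ∈ Set.Ici (0 : ℝ), (1 + (s * t) ^ 2)⁻¹ ≤ h t + δ := by
  obtain ⟨r, hr, h_near⟩ := exists_pos_forall_lt_of_continuousOn hh (m := 1 - δ) (by linarith)
  filter_upwards [eventually_inv_mul_sq_le hr hδ, eventually_gt_atTop 0] with s hs hs_pos t ht
  rcases lt_or_ge t r with htr | hrt
  · have : (1 + (s * t) ^ 2)⁻¹ ≤ 1 := inv_le_one_of_one_le₀ (by linarith [sq_nonneg (s * t)])
    linarith [h_near t ht htr]
  · have ht_pos : 0 < t := hr.trans_le hrt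
    have : (1 + (s * t) ^ 2)⁻¹ ≤ ((s * t) ^ 2)⁻¹ := inv_anti₀ (by positivity) (by linarith)
    linarith [hs t hrt, h_nonneg t ht]

lemma log_le_half_log_one_add_sq {x : ℝ} (hx : 0 < x) :
    Real.log x ≤ Real.log (1 + x ^ 2) / 2 := by
  have h : Real.log (x ^ 2) ≤ Real.log (1 + x ^ 2) := Real.log_le_log (by positivity) (by linarith)
  rw [Real.log_pow] at h
  push_cast at h
  linarith

lemma half_log_one_add_sq_le {x : ℝ} (hx : 0 < x) :
    Real.log (1 + x ^ 2) / 2 ≤ Real.log x + (x ^ 2)⁻¹ / 2 := by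
  have hmul : 1 + x ^ 2 = x ^ 2 * (1 + (x ^ 2)⁻¹) := by field_simp; ring
  have hlog := Real.log_le_sub_one_of_pos (x := 1 + (x ^ 2)⁻¹) (by positivity)
  rw [hmul, Real.log_mul (by positivity) (by positivity), Real.log_pow]
  push_cast
  linarith

lemma eventually_half_log_one_add_mul_sq_sub_log_le {g : ℝ → ℝ} (hg : g ∈ lnPlusMajorants) {δ : ℝ}
    (hδ : 0 < δ) : ∀ᶠ s : ℝ in atTop, ∀ t ∈ Set.Ici (0 : ℝ),
      Real.log (1 + (s * t) ^ 2) / 2 - Real.log s ≤ g t + δ := by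
  obtain ⟨hg_cont, hg_log⟩ := hg
  have hg_zero : 0 ≤ g 0 := by simpa using hg_log 0 Set.self_mem_Ici
  obtain ⟨r, hr, hg_near⟩ :=
    exists_pos_forall_lt_of_continuousOn hg_cont (m := -δ) (by linarith)
  filter_upwards [eventually_inv_mul_sq_le (r := min r (1 / 2)) (by positivity) hδ,
    eventually_ge_atTop 2] with s hs hs_two t (ht : 0 ≤ t)
  rcases lt_or_ge t (min r (1 / 2)) with ht_lt | ht_ge
  · obtain ⟨htr, ht_half⟩ := lt_min_iff.1 ht_lt
    have hst : s * t ≤ s * (1 / 2) := by gcongr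
    have hlog : Real.log (1 + (s * t) ^ 2) ≤ Real.log (s ^ 2) :=
      Real.log_le_log (by positivity) (by nlinarith [mul_nonneg (by linarith : 0 ≤ s) ht])
    rw [Real.log_pow] at hlog
    push_cast at hlog
    linarith [hg_near t ht htr]
  · have ht_pos : 0 < t := ht_ge.trans_lt' (by positivity)
    have hlog := half_log_one_add_sq_le (x := s * t) (by positivity)
    rw [Real.log_mul (by positivity) (by positivity)] at hlog
    linarith [hs t ht_ge, hg_log t ht]

end RealBounds

/-- `τ(f(|x|²))`, as a real number. -/
def traceSqAbs {A : Type*} [CStarAlgebra A] (τ : A → ℂ) (f : ℝ → ℝ) (x : A) : ℝ :=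
  (τ (cfc f (star x * x))).re

/-- The regularisation `τ(ln √(1 + |s x|²)) - ln s · rk_τ(x)` of `τ(ln₊|x|)`, which it approaches
as `s → ∞`: the integrand is `ln √(s⁻² + t²)` at `t > 0` and `0` at `t = 0`. -/
def regTraceLn {A : Type*} [CStarAlgebra A] (τ : A → ℂ) (s : ℝ) (x : A) : ℝ :=
  traceSqAbs τ (fun t => Real.log (1 + t)) (s • x) / 2 - Real.log s * traceRank τ x

lemma exists_re_cfc_cfcAbs_lt_of_traceKerDim_lt {A : Type*} [CStarAlgebra A] {τ : A → ℂ}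
    {x : A} {r : ℝ} (hr : traceKerDim τ x < r) :
    ∃ h : ℝ → ℝ, ContinuousOn h (Set.Ici 0) ∧ (∀ t ∈ Set.Ici (0 : ℝ), h t ∈ Set.Icc (0 : ℝ) 1) ∧
      h 0 = 1 ∧ (τ (cfc h (cfcAbs x))).re < r := by
  obtain ⟨_, ⟨h, hh, h_mem, h_zero, rfl⟩, h_lt⟩ := exists_lt_of_csInf_lt (by
    exact ⟨_, fun _ => 1, continuousOn_const, fun _ _ => by simp, rfl, rfl⟩) hr
  exact ⟨h, hh, h_mem, h_zero, h_lt⟩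

namespace IsCStarTrace

variable {A : Type*} [CStarAlgebra A] {τ : A → ℂ}

section Linear

lemma map_real_smul (hτ : IsCStarTrace τ) (r : ℝ) (x : A) : τ (r • x) = r * τ x := by
  rw [← Complex.coe_smul, hτ.2.1]

lemma re_cfc_add_const_mul (hτ : IsCStarTrace τ) {y : A} {f g : ℝ → ℝ}
    (hf : ContinuousOn f (spectrum ℝ y)) (hg : ContinuousOn g (spectrum ℝ y)) (r : ℝ) :
    (τ (cfc (fun t => f t + r * g t) y)).re = (τ (cfc f y)).re + r * (τ (cfc g y)).re := by
  rw [cfc_add (a := y) f (fun t => r * g t) hf (continuousOn_const.mul hg),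
    cfc_const_mul r g y hg, hτ.1, hτ.map_real_smul, Complex.add_re, Complex.re_ofReal_mul]

lemma map_aeval_mul_comm (hτ : IsCStarTrace τ) (x y : A) (p : Polynomial ℝ) :
    τ (Polynomial.aeval (x * y) p) = τ (Polynomial.aeval (y * x) p) := by
  induction p using Polynomial.induction_on' with
  | add p q hp hq => simp only [map_add, hτ.1, hp, hq]
  | monomial n r =>
    simp only [Polynomial.aeval_monomial, ← Algebra.smul_def, hτ.map_real_smul]
    congr 1
    cases n with
    | zero => simp
    | succ n => rw [pow_succ, ← mul_assoc, mul_pow_mul, hτ.2.2.2, ← mul_assoc, ← pow_succ']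

end Linear

section Order

variable [PartialOrder A] [StarOrderedRing A]

lemma re_nonneg (hτ : IsCStarTrace τ) {y : A} (hy : 0 ≤ y) : 0 ≤ (τ y).re := by
  obtain ⟨s, rfl⟩ := CStarAlgebra.nonneg_iff_eq_star_mul_self.1 hy
  exact (Complex.le_def.1 (hτ.2.2.1 s)).1

lemma re_mono (hτ : IsCStarTrace τ) {x y : A} (hxy : x ≤ y) : (τ x).re ≤ (τ y).re := by
  have h := hτ.1 x (y - x)
  rw [add_sub_cancel] at h
  rw [h, Complex.add_re]
  exact le_add_of_nonneg_right (hτ.re_nonneg (sub_nonneg.2 hxy))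

end Order

section SpectralOrder

attribute [local instance] CStarAlgebra.spectralOrder CStarAlgebra.spectralOrderedRing

lemma re_cfc_le_add_const (hτ : IsCStarTrace τ) {y : A} (hy : IsSelfAdjoint y) {f g : ℝ → ℝ}
    (hf : ContinuousOn f (spectrum ℝ y)) (hg : ContinuousOn g (spectrum ℝ y)) {δ : ℝ}
    (hfg : ∀ t ∈ spectrum ℝ y, f t ≤ g t + δ) :
    (τ (cfc f y)).re ≤ (τ (cfc g y)).re + δ * (τ 1).re :=
  calc (τ (cfc f y)).re ≤ (τ (cfc (fun t => g t + δ * 1) y)).re :=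
        hτ.re_mono (cfc_mono (by simpa using hfg) hf (by fun_prop))
    _ = (τ (cfc g y)).re + δ * (τ 1).re := by
        rw [hτ.re_cfc_add_const_mul hg continuousOn_const, cfc_const_one ℝ y]

lemma re_cfc_cfcAbs_le_add_const (hτ : IsCStarTrace τ) {f g : ℝ → ℝ}
    (hf : ContinuousOn f (Set.Ici 0)) (hg : ContinuousOn g (Set.Ici 0)) {δ : ℝ}
    (hfg : ∀ t ∈ Set.Ici (0 : ℝ), f t ≤ g t + δ) (x : A) :
    (τ (cfc f (cfcAbs x))).re ≤ (τ (cfc g (cfcAbs x))).re + δ * (τ 1).re :=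
  have hx := spectrum_cfcAbs_subset x
  hτ.re_cfc_le_add_const (isSelfAdjoint_cfcAbs x) (hf.mono hx) (hg.mono hx)
    fun t ht => hfg t (hx ht)

lemma abs_traceSqAbs_sub_le (hτ : IsCStarTrace τ) {f g : ℝ → ℝ} {x : A} {δ : ℝ}
    (hf : ContinuousOn f (Set.Icc 0 (‖x‖ ^ 2))) (hg : ContinuousOn g (Set.Icc 0 (‖x‖ ^ 2)))
    (hfg : ∀ t ∈ Set.Icc 0 (‖x‖ ^ 2), |f t - g t| ≤ δ) :
    |traceSqAbs τ f x - traceSqAbs τ g x| ≤ δ * (τ 1).re := by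
  have hx := spectrum_star_mul_self_subset x
  have hsa := IsSelfAdjoint.star_mul_self x
  have hfg_le := hτ.re_cfc_le_add_const hsa (hf.mono hx) (hg.mono hx) (δ := δ)
    fun t ht => by linarith [(abs_le.1 (hfg t (hx ht))).2]
  have hgf_le := hτ.re_cfc_le_add_const hsa (hg.mono hx) (hf.mono hx) (δ := δ)
    fun t ht => by linarith [(abs_le.1 (hfg t (hx ht))).1]
  exact abs_sub_le_iff.2 ⟨sub_le_iff_le_add'.2 hfg_le, sub_le_iff_le_add'.2 hgf_le⟩

lemma traceSqAbs_eval_star (hτ : IsCStarTrace τ) (p : Polynomial ℝ) (x : A) :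
    traceSqAbs τ p.eval (star x) = traceSqAbs τ p.eval x := by
  simp only [traceSqAbs]
  rw [cfc_polynomial p _ (.star_mul_self _), cfc_polynomial p _ (.star_mul_self _), star_star,
    hτ.map_aeval_mul_comm]

lemma traceSqAbs_star (hτ : IsCStarTrace τ) {f : ℝ → ℝ} (hf : ContinuousOn f (Set.Ici 0)) (x : A) :
    traceSqAbs τ f (star x) = traceSqAbs τ f x := by
  refine eq_of_forall_dist_le fun ε hε => ?_
  obtain ⟨δ, hδ, hδε⟩ := exists_pos_mul_lt hε (2 * (τ 1).re)
  have hf' : ContinuousOn f (Set.Icc 0 (‖x‖ ^ 2)) := hf.mono Set.Icc_subset_Ici_self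
  obtain ⟨p, hp⟩ := exists_polynomial_near_of_continuousOn 0 (‖x‖ ^ 2) f hf' δ hδ
  have hfp (t) (ht : t ∈ Set.Icc 0 (‖x‖ ^ 2)) : |f t - p.eval t| ≤ δ :=
    (abs_sub_comm _ _).trans_le (hp t ht).le
  have hx := hτ.abs_traceSqAbs_sub_le hf' p.continuousOn hfp
  have hx_star := hτ.abs_traceSqAbs_sub_le (x := star x) (f := f) (g := p.eval) (δ := δ)
    (by rwa [norm_star]) p.continuousOn (by rwa [norm_star])
  rw [hτ.traceSqAbs_eval_star] at hx_star
  calc dist (traceSqAbs τ f (star x)) (traceSqAbs τ f x)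
      ≤ dist (traceSqAbs τ f (star x)) (traceSqAbs τ p.eval x)
        + dist (traceSqAbs τ f x) (traceSqAbs τ p.eval x) := dist_triangle_right _ _ _
    _ ≤ δ * (τ 1).re + δ * (τ 1).re := add_le_add hx_star hx
    _ ≤ ε := by linarith

end SpectralOrder

section Order

variable [PartialOrder A] [StarOrderedRing A]

lemma traceSqAbs_mul_le_left (hτ : IsCStarTrace τ) {f : ℝ → ℝ}
    (hf_mono : MonotoneOn (cfc f) (Set.Ici (0 : A))) (a b : A) :
    traceSqAbs τ f (a * b) ≤ traceSqAbs τ f (‖a‖ • b) :=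
  hτ.re_mono (hf_mono (Set.mem_Ici.2 (star_mul_self_nonneg _))
    (Set.mem_Ici.2 (star_mul_self_nonneg _)) (star_mul_self_mul_le a b))

lemma traceSqAbs_mul_le_right (hτ : IsCStarTrace τ) {f : ℝ → ℝ} (hf : ContinuousOn f (Set.Ici 0))
    (hf_mono : MonotoneOn (cfc f) (Set.Ici (0 : A))) (b c : A) :
    traceSqAbs τ f (b * c) ≤ traceSqAbs τ f (‖c‖ • b) :=
  calc traceSqAbs τ f (b * c) = traceSqAbs τ f (star c * star b) := by
        rw [← star_mul, hτ.traceSqAbs_star hf]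
    _ ≤ traceSqAbs τ f (‖star c‖ • star b) := hτ.traceSqAbs_mul_le_left hf_mono _ _
    _ = traceSqAbs τ f (‖c‖ • b) := by
        rw [norm_star, ← star_trivial ‖c‖, ← star_smul, hτ.traceSqAbs_star hf, star_trivial]

lemma traceSqAbs_smul_mul_mul_le (hτ : IsCStarTrace τ) {f : ℝ → ℝ}
    (hf : ContinuousOn f (Set.Ici 0)) (hf_mono : MonotoneOn (cfc f) (Set.Ici (0 : A))) (s : ℝ)
    (a b c : A) :
    traceSqAbs τ f (s • (a * b * c)) ≤ traceSqAbs τ f ((s * (‖a‖ * ‖c‖)) • b) :=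
  calc traceSqAbs τ f (s • (a * b * c)) = traceSqAbs τ f (a * (s • b * c)) := by
        rw [smul_mul_assoc, mul_smul_comm, mul_assoc]
    _ ≤ traceSqAbs τ f (‖a‖ • (s • b * c)) := hτ.traceSqAbs_mul_le_left hf_mono _ _
    _ = traceSqAbs τ f ((‖a‖ • s • b) * c) := by rw [← smul_mul_assoc]
    _ ≤ traceSqAbs τ f (‖c‖ • ‖a‖ • s • b) := hτ.traceSqAbs_mul_le_right hf hf_mono _ _
    _ = traceSqAbs τ f ((s * (‖a‖ * ‖c‖)) • b) := by
        rw [smul_smul, smul_smul, mul_comm ‖c‖, mul_comm s]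

end Order

section SpectralOrder

attribute [local instance] CStarAlgebra.spectralOrder CStarAlgebra.spectralOrderedRing

lemma traceKerDim_le (hτ : IsCStarTrace τ) {h : ℝ → ℝ} (hh : ContinuousOn h (Set.Ici 0))
    (h_mem : ∀ t ∈ Set.Ici (0 : ℝ), h t ∈ Set.Icc (0 : ℝ) 1) (h_zero : h 0 = 1) (x : A) :
    traceKerDim τ x ≤ (τ (cfc h (cfcAbs x))).re := by
  refine csInf_le ⟨0, ?_⟩ ⟨h, hh, h_mem, h_zero, rfl⟩
  rintro _ ⟨k, -, k_mem, -, rfl⟩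
  exact hτ.re_nonneg (cfc_nonneg fun t ht => (k_mem t (spectrum_cfcAbs_subset x ht)).1)

-- `min 1 (1 - u / L)` is admissible in the infimum defining `traceKerDim`.
lemma re_cfc_cfcAbs_le_mul_traceRank (hτ : IsCStarTrace τ) {u : ℝ → ℝ}
    (hu : ContinuousOn u (Set.Ici 0)) {L : ℝ} (hL : 0 < L) (hu_le : ∀ t ∈ Set.Ici (0 : ℝ), u t ≤ L)
    (hu_zero : u 0 ≤ 0) (x : A) :
    (τ (cfc u (cfcAbs x))).re ≤ L * traceRank τ x := by
  have hx := spectrum_cfcAbs_subset x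
  have h_cont : ContinuousOn (fun t => 1 + -L⁻¹ * u t) (Set.Ici 0) := by fun_prop
  have hker : traceKerDim τ x ≤ (τ (cfc (fun t => min 1 (1 + -L⁻¹ * u t)) (cfcAbs x))).re := by
    refine hτ.traceKerDim_le (continuousOn_const.inf h_cont)
      (fun t ht => ⟨le_min zero_le_one ?_, min_le_left _ _⟩) (min_eq_left ?_) x
    · have : L⁻¹ * u t ≤ 1 := inv_mul_le_one_of_le₀ (hu_le t ht) hL.le
      linarith
    · have : L⁻¹ * u 0 ≤ 0 := mul_nonpos_of_nonneg_of_nonpos (by positivity) hu_zero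
      linarith
  have hmin : (τ (cfc (fun t => min 1 (1 + -L⁻¹ * u t)) (cfcAbs x))).re
      ≤ (τ 1).re - L⁻¹ * (τ (cfc u (cfcAbs x))).re :=
    calc (τ (cfc (fun t => min 1 (1 + -L⁻¹ * u t)) (cfcAbs x))).re
        ≤ (τ (cfc (fun t => 1 + -L⁻¹ * u t) (cfcAbs x))).re + 0 * (τ 1).re :=
          hτ.re_cfc_cfcAbs_le_add_const (continuousOn_const.inf h_cont) h_cont
            (fun t _ => (min_le_right _ _).trans_eq (add_zero _).symm) x
      _ = (τ 1).re - L⁻¹ * (τ (cfc u (cfcAbs x))).re := by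
          rw [hτ.re_cfc_add_const_mul continuousOn_const (hu.mono hx),
            cfc_const_one ℝ _ (isSelfAdjoint_cfcAbs x)]
          ring
  rw [← inv_mul_le_iff₀ hL, traceRank]
  linarith

lemma traceSqAbs_one_sub_inv_le_traceRank (hτ : IsCStarTrace τ) (s : ℝ) (x : A) :
    traceSqAbs τ (fun t => 1 - (1 + t)⁻¹) (s • x) ≤ traceRank τ x := by
  rw [traceSqAbs, ← cfc_comp_mul_sq_cfcAbs continuousOn_one_sub_inv_one_add,
    ← one_mul (traceRank τ x)]
  refine hτ.re_cfc_cfcAbs_le_mul_traceRank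
    (continuousOn_comp_mul_sq continuousOn_one_sub_inv_one_add s) one_pos (fun t _ => ?_) ?_ x
  · exact sub_le_self 1 (by positivity)
  · simp

lemma tendsto_traceSqAbs_one_sub_inv (hτ : IsCStarTrace τ) (x : A) :
    Tendsto (fun s : ℝ => traceSqAbs τ (fun t => 1 - (1 + t)⁻¹) (s • x)) atTop
      (𝓝 (traceRank τ x)) := by
  refine tendsto_order.2 ⟨fun r hr => ?_, fun r hr =>
    .of_forall fun s => (hτ.traceSqAbs_one_sub_inv_le_traceRank s x).trans_lt hr⟩
  obtain ⟨h, hh, h_mem, h_zero, h_lt⟩ :=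
    exists_re_cfc_cfcAbs_lt_of_traceKerDim_lt (x := x) (τ := τ) (r := (τ 1).re - r)
      (by rw [traceRank] at hr; linarith)
  obtain ⟨δ, hδ, hδ_lt⟩ := exists_pos_mul_lt (sub_pos.2 h_lt) (τ 1).re
  filter_upwards [eventually_inv_one_add_mul_sq_le_add hh (fun t ht => (h_mem t ht).1) h_zero.ge hδ]
    with s hs
  have hx := spectrum_cfcAbs_subset x
  have h_le : (τ (cfc (fun t => 1 + -1 * h t) (cfcAbs x))).re
      ≤ traceSqAbs τ (fun t => 1 - (1 + t)⁻¹) (s • x) + δ * (τ 1).re := by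
    rw [traceSqAbs, ← cfc_comp_mul_sq_cfcAbs continuousOn_one_sub_inv_one_add]
    exact hτ.re_cfc_cfcAbs_le_add_const (by fun_prop)
      (continuousOn_comp_mul_sq continuousOn_one_sub_inv_one_add s)
      (fun t ht => by linarith [hs t ht]) x
  rw [hτ.re_cfc_add_const_mul continuousOn_const (hh.mono hx),
    cfc_const_one ℝ _ (isSelfAdjoint_cfcAbs x)] at h_le
  linarith

lemma traceRank_mul_mul_le (hτ : IsCStarTrace τ) (a b c : A) :
    traceRank τ (a * b * c) ≤ traceRank τ b :=
  le_of_tendsto' (hτ.tendsto_traceSqAbs_one_sub_inv (a * b * c)) fun s =>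
    (hτ.traceSqAbs_smul_mul_mul_le continuousOn_one_sub_inv_one_add
      monotoneOn_cfc_one_sub_inv_one_add s a b c).trans
      (hτ.traceSqAbs_one_sub_inv_le_traceRank _ b)

lemma traceRank_mul_mul_of_isUnit (hτ : IsCStarTrace τ) {a c : A} (ha : IsUnit a) (b : A)
    (hc : IsUnit c) : traceRank τ (a * b * c) = traceRank τ b := by
  refine (hτ.traceRank_mul_mul_le a b c).antisymm ?_
  lift a to Aˣ using ha
  lift c to Aˣ using hc
  simpa [mul_assoc] using hτ.traceRank_mul_mul_le (↑a⁻¹) (a * b * c) (↑c⁻¹)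

lemma regTraceLn_eq_re_cfc (hτ : IsCStarTrace τ) (s : ℝ) (x : A) :
    regTraceLn τ s x = (τ (cfc (fun t => 2⁻¹ * Real.log (1 + (s * t) ^ 2)) (cfcAbs x))).re
      - Real.log s * traceRank τ x := by
  have hlog := (continuousOn_comp_mul_sq continuousOn_log_one_add s).mono (spectrum_cfcAbs_subset x)
  rw [regTraceLn, traceSqAbs, ← cfc_comp_mul_sq_cfcAbs continuousOn_log_one_add,
    cfc_const_mul 2⁻¹ _ _ hlog, hτ.map_real_smul, Complex.re_ofReal_mul, div_eq_inv_mul]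

lemma traceLnPlus_le_sub_log_mul (hτ : IsCStarTrace τ) {s : ℝ} (hs : 1 ≤ s) {f : ℝ → ℝ}
    (hf : ContinuousOn f (Set.Ici 0)) (hf_le : ∀ t ∈ Set.Ici (0 : ℝ), f t ≤ 1) (hf_zero : f 0 ≤ 0)
    (x : A) :
    traceLnPlus τ x ≤ (((τ (cfc (fun t => 2⁻¹ * Real.log (1 + (s * t) ^ 2)) (cfcAbs x))).re
      - Real.log s * (τ (cfc f (cfcAbs x))).re : ℝ) : EReal) := by
  have hlog_cont := (continuousOn_comp_mul_sq continuousOn_log_one_add s).const_mul 2⁻¹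
  have hlog_s := Real.log_nonneg hs
  have hx := spectrum_cfcAbs_subset x
  have hmem : (fun t => 2⁻¹ * Real.log (1 + (s * t) ^ 2) + -Real.log s * f t)
      ∈ lnPlusMajorants := by
    refine ⟨hlog_cont.add (continuousOn_const.mul hf), fun t ht => ?_⟩
    rcases (Set.mem_Ici.1 ht).eq_or_lt with rfl | ht_pos
    · simpa using mul_nonpos_of_nonneg_of_nonpos hlog_s hf_zero
    · have hlog := log_le_half_log_one_add_sq (x := s * t) (by positivity)
      rw [Real.log_mul (by positivity) ht_pos.ne'] at hlog
      linarith [mul_le_mul_of_nonneg_left (hf_le t ht) hlog_s]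
  refine (iInf₂_le _ hmem).trans_eq ?_
  rw [hτ.re_cfc_add_const_mul (hlog_cont.mono hx) (hf.mono hx), neg_mul, ← sub_eq_add_neg]

lemma traceLnPlus_le_regTraceLn (hτ : IsCStarTrace τ) {s : ℝ} (hs : 1 ≤ s) (x : A) :
    traceLnPlus τ x ≤ (regTraceLn τ s x : EReal) := by
  rw [hτ.regTraceLn_eq_re_cfc]
  refine ge_of_tendsto' ((continuous_coe_real_ereal.tendsto _).comp
    (((hτ.tendsto_traceSqAbs_one_sub_inv x).const_mul _).const_sub _)) fun n => ?_
  rw [Function.comp_apply, traceSqAbs, ← cfc_comp_mul_sq_cfcAbs continuousOn_one_sub_inv_one_add]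
  exact hτ.traceLnPlus_le_sub_log_mul hs
    (continuousOn_comp_mul_sq continuousOn_one_sub_inv_one_add n)
    (fun t _ => sub_le_self 1 (by positivity)) (by simp) x

lemma eventually_regTraceLn_lt (hτ : IsCStarTrace τ) {g : ℝ → ℝ} (hg : g ∈ lnPlusMajorants)
    {x : A} {r : ℝ} (hr : (τ (cfc g (cfcAbs x))).re < r) :
    ∀ᶠ s : ℝ in atTop, regTraceLn τ s x < r := by
  obtain ⟨δ, hδ, hδ_lt⟩ := exists_pos_mul_lt (sub_pos.2 hr) (τ 1).re
  filter_upwards [eventually_half_log_one_add_mul_sq_sub_log_le hg hδ, eventually_gt_atTop 1]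
    with s hs hs_one
  obtain ⟨hg_cont, hg_log⟩ := hg
  have hg_zero : 0 ≤ g 0 := by simpa using hg_log 0 Set.self_mem_Ici
  have hx := spectrum_cfcAbs_subset x
  have hlog_cont := (continuousOn_comp_mul_sq continuousOn_log_one_add s).const_mul 2⁻¹
  have hgδ_cont : ContinuousOn (fun t => g t + δ * 1) (Set.Ici 0) := by fun_prop
  have hle := hτ.re_cfc_cfcAbs_le_mul_traceRank
    (u := fun t => 2⁻¹ * Real.log (1 + (s * t) ^ 2) + -1 * (g t + δ * 1)) (by fun_prop)
    (Real.log_pos hs_one) (fun t ht => by linarith [hs t ht]) (by simp; linarith) x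
  rw [hτ.re_cfc_add_const_mul (hlog_cont.mono hx) (hgδ_cont.mono hx),
    hτ.re_cfc_add_const_mul (hg_cont.mono hx) continuousOn_const,
    cfc_const_one ℝ _ (isSelfAdjoint_cfcAbs x)] at hle
  rw [hτ.regTraceLn_eq_re_cfc]
  linarith

lemma tendsto_regTraceLn (hτ : IsCStarTrace τ) (x : A) :
    Tendsto (fun s : ℝ => (regTraceLn τ s x : EReal)) atTop (𝓝 (traceLnPlus τ x)) := by
  refine tendsto_order.2 ⟨fun r hr => ?_, fun r hr => ?_⟩
  · filter_upwards [eventually_ge_atTop 1] with s hs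
    exact hr.trans_le (hτ.traceLnPlus_le_regTraceLn hs x)
  · obtain ⟨z, hz, hzr⟩ := EReal.lt_iff_exists_real_btwn.1 hr
    simp only [traceLnPlus, iInf_lt_iff] at hz
    obtain ⟨g, hg, hgz⟩ := hz
    filter_upwards [hτ.eventually_regTraceLn_lt hg (EReal.coe_lt_coe_iff.1 hgz)] with s hs
    exact (EReal.coe_lt_coe_iff.2 hs).trans hzr

lemma regTraceLn_mul_mul_le (hτ : IsCStarTrace τ) {a b c : A} (ha : a ≠ 0) (hc : c ≠ 0)
    (hrank : traceRank τ (a * b * c) = traceRank τ b) {s : ℝ} (hs : 0 < s) :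
    regTraceLn τ s (a * b * c) ≤
      Real.log (‖a‖ * ‖c‖) * traceRank τ b + regTraceLn τ (s * (‖a‖ * ‖c‖)) b := by
  have hlog : Real.log (s * (‖a‖ * ‖c‖)) = Real.log s + Real.log (‖a‖ * ‖c‖) :=
    Real.log_mul hs.ne' (mul_ne_zero (norm_ne_zero_iff.2 ha) (norm_ne_zero_iff.2 hc))
  have htrace := hτ.traceSqAbs_smul_mul_mul_le continuousOn_log_one_add
    monotoneOn_cfc_log_one_add s a b c
  rw [regTraceLn, regTraceLn, hrank, hlog]
  linarith

end SpectralOrder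

end IsCStarTrace

theorem stmt14_general {A : Type*} [CStarAlgebra A] {a b c : A} (ha : a ≠ 0) (hc : c ≠ 0)
    {τ : A → ℂ} (hτ : IsCStarTrace τ) (hrank : traceRank τ (a * b * c) = traceRank τ b) :
    traceLnPlus τ (a * b * c) ≤
      ((Real.log (‖a‖ * ‖c‖) * traceRank τ b : ℝ) : EReal) + traceLnPlus τ b := by
  have hnorm : 0 < ‖a‖ * ‖c‖ := mul_pos (norm_pos_iff.2 ha) (norm_pos_iff.2 hc)
  have hlim : Tendsto (fun s : ℝ => ((Real.log (‖a‖ * ‖c‖) * traceRank τ b : ℝ) : EReal)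
      + (regTraceLn τ (s * (‖a‖ * ‖c‖)) b : EReal)) atTop
      (𝓝 (((Real.log (‖a‖ * ‖c‖) * traceRank τ b : ℝ) : EReal) + traceLnPlus τ b)) :=
    (EReal.continuousAt_add (.inl (EReal.coe_ne_top _)) (.inl (EReal.coe_ne_bot _))).tendsto.comp
      (tendsto_const_nhds.prodMk_nhds
        ((hτ.tendsto_regTraceLn b).comp (tendsto_id.atTop_mul_const hnorm)))
  refine le_of_tendsto_of_tendsto (hτ.tendsto_regTraceLn (a * b * c)) hlim ?_
  filter_upwards [eventually_gt_atTop 0] with s hs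
  exact_mod_cast hτ.regTraceLn_mul_mul_le ha hc hrank hs

/-- for `a, b, c ∈ A` with `a` and `c` invertible and any trace `τ`,
`τ(ln₊|abc|) ≤ ln(‖a‖‖c‖)·rk_τ(b) + τ(ln₊|b|)`. -/
theorem stmt14 {A : Type*} [CStarAlgebra A] (a b c : A) (ha : IsUnit a) (hc : IsUnit c)
    (τ : A → ℂ) (hτ : IsCStarTrace τ) :
    traceLnPlus τ (a * b * c) ≤
      ((Real.log (‖a‖ * ‖c‖) * traceRank τ b : ℝ) : EReal) + traceLnPlus τ b := by
  rcases subsingleton_or_nontrivial A with _ | _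
  · rw [Subsingleton.elim (a * b * c) b, Subsingleton.elim a 0]
    simp
  · exact stmt14_general ha.ne_zero hc.ne_zero hτ (hτ.traceRank_mul_mul_of_isUnit ha b hc)

end
end
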